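/- Assume n ≥ 2 and let λ ∈ K. The left D-module D/D(E−λ) is torsion-free over A: if m ∈ D and there exists N ∈ ℕ such that x_0^{b_0}∘⋯∘x_n^{b_n}∘m ∈ D(E−λ) for every (b_0,…,b_n) ∈ ℕ^{n+1} with Σ_i b_i d_i ≥ N, then m ∈ D(E−λ). -/

import Mathlib

/-!
Context: `K` is a field of characteristic zero, `n ≥ 0`, and `d 0, …, d n` are
positive integers.  `A = K[x_0, …, x_n]` is the polynomial ring, graded with
`x i` of weighted degree `d i`.  Inside `End_K(A)` we have the multiplication
operators `x i`, the partial derivatives `∂ i`, the Weyl algebra `D` generated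
by them, and the Euler field `E = Σ_i d_i x_i ∂_i`.
-/

open MvPolynomial Finset

set_option linter.unusedSectionVars false
set_option synthInstance.maxHeartbeats 1000000
set_option maxHeartbeats 2000000

noncomputable section

variable (K : Type) [Field K] [CharZero K] (n : ℕ)

/-- The polynomial ring `A = K[x_0, …, x_n]`. -/
abbrev Amb := MvPolynomial (Fin (n+1)) K

/-- The operator of multiplication by `x_i` on `A`. -/
def xOp (i : Fin (n+1)) : Module.End K (Amb K n) := LinearMap.mulLeft K (X i)

/-- The partial derivative `∂/∂x_i` on `A`. -/
def dOp (i : Fin (n+1)) : Module.End K (Amb K n) := (pderiv i).toLinearMap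

/-- The Weyl algebra `D`: the `K`-subalgebra of `End_K(A)` generated by
`x_0, …, x_n, ∂_0, …, ∂_n`. -/
def Weyl : Subalgebra K (Module.End K (Amb K n)) :=
  Algebra.adjoin K (Set.range (xOp K n) ∪ Set.range (dOp K n))

variable (d : Fin (n+1) → ℕ)

/-- The Euler field `E = Σ_i d_i x_i ∂_i`, as an endomorphism of `A`. -/
def euler : Module.End K (Amb K n) := ∑ i, (d i : K) • (xOp K n i * dOp K n i)

lemma xOp_mem (i : Fin (n+1)) : xOp K n i ∈ Weyl K n :=
  Algebra.subset_adjoin (Or.inl ⟨i, rfl⟩)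

lemma dOp_mem (i : Fin (n+1)) : dOp K n i ∈ Weyl K n :=
  Algebra.subset_adjoin (Or.inr ⟨i, rfl⟩)

lemma euler_mem : euler K n d ∈ Weyl K n :=
  Subalgebra.sum_mem _ fun i _ => Subalgebra.smul_mem _
    (Subalgebra.mul_mem _ (xOp_mem K n i) (dOp_mem K n i)) _

/-- `x_i` as an element of the Weyl algebra. -/
def xElt (i : Fin (n+1)) : Weyl K n := ⟨xOp K n i, xOp_mem K n i⟩

/-- `∂_i` as an element of the Weyl algebra. -/
def dElt (i : Fin (n+1)) : Weyl K n := ⟨dOp K n i, dOp_mem K n i⟩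

/-- The Euler field as an element of the Weyl algebra. -/
def eulerElt : Weyl K n := ⟨euler K n d, euler_mem K n d⟩

lemma xOp_apply (i : Fin (n+1)) (p : Amb K n) : xOp K n i p = X i * p := rfl

lemma dOp_apply (i : Fin (n+1)) (p : Amb K n) : dOp K n i p = pderiv i p := rfl

/-- The operator `∂^b`, given by its action on monomials. -/
def dMon (b : Fin (n+1) →₀ ℕ) : Module.End K (Amb K n) :=
  (basisMonomials (Fin (n+1)) K).constr K
    fun a => monomial (a - b) (∏ j, ((a j).descFactorial (b j) : K))

lemma dMon_monomial (b a : Fin (n+1) →₀ ℕ) :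
    dMon K n b (monomial a 1) = monomial (a - b) (∏ j, ((a j).descFactorial (b j) : K)) := by
  have := (basisMonomials (Fin (n+1)) K).constr_basis K
    (fun a => monomial (a - b) (∏ j, ((a j).descFactorial (b j) : K))) a
  simpa [dMon] using this

lemma end_ext {u v : Module.End K (Amb K n)}
    (h : ∀ a, u (monomial a 1) = v (monomial a 1)) : u = v :=
  (basisMonomials (Fin (n+1)) K).ext fun a => by simpa using h a

lemma dMon_zero : dMon K n 0 = 1 :=
  end_ext K n fun a => by simp [dMon_monomial]

lemma dOp_mul_dMon (i : Fin (n+1)) (b : Fin (n+1) →₀ ℕ) :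
    dOp K n i * dMon K n b = dMon K n (b + Finsupp.single i 1) := by
  refine end_ext K n fun a => ?_
  rw [Module.End.mul_apply, dMon_monomial, dMon_monomial, dOp_apply, pderiv_monomial,
    tsub_tsub]
  congr 1
  rw [← Finset.mul_prod_erase _ _ (Finset.mem_univ i), ← Finset.mul_prod_erase _ _
    (Finset.mem_univ i)]
  have h : ∏ j ∈ univ.erase i, ((a j).descFactorial ((b + Finsupp.single i 1 : Fin (n+1) →₀ ℕ) j) : K)
      = ∏ j ∈ univ.erase i, ((a j).descFactorial (b j) : K) :=
    Finset.prod_congr rfl fun j hj => by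
      simp [(Finset.ne_of_mem_erase hj).symm]
  rw [h]
  simp [Nat.descFactorial_succ]
  ring

lemma dMon_mem (b : Fin (n+1) →₀ ℕ) : dMon K n b ∈ Weyl K n := by
  induction b using Finsupp.induction with
  | zero => rw [dMon_zero]; exact one_mem _
  | single_add i k f _ _ ih =>
    clear * - ih
    induction k with
    | zero => simpa using ih
    | succ k hk =>
      have : Finsupp.single i (k + 1) + f = Finsupp.single i k + f + Finsupp.single i 1 := by
        rw [Finsupp.single_add]; abel
      rw [this, ← dOp_mul_dMon]
      exact mul_mem (dOp_mem K n i) hk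

lemma smul_mem_Weyl (f : Amb K n) {u : Module.End K (Amb K n)} (hu : u ∈ Weyl K n) :
    f • u ∈ Weyl K n := by
  induction f using MvPolynomial.induction_on generalizing u with
  | C c =>
    have : (C c : Amb K n) • u = c • u := by
      refine LinearMap.ext fun p => ?_
      simp [C_mul']
    rw [this]
    exact Subalgebra.smul_mem _ hu c
  | add p q hp hq => rw [add_smul]; exact add_mem (hp hu) (hq hu)
  | mul_X p i hp =>
    rw [mul_smul]
    exact hp (mul_mem (xOp_mem K n i) hu)

lemma Weyl_le_span {w : Module.End K (Amb K n)} (hw : w ∈ Weyl K n) :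
    w ∈ Submodule.span (Amb K n) (Set.range (dMon K n)) := by
  suffices H : ∀ u ∈ Submodule.span (Amb K n) (Set.range (dMon K n)),
      w * u ∈ Submodule.span (Amb K n) (Set.range (dMon K n)) by
    simpa using H 1 (Submodule.subset_span ⟨0, dMon_zero K n⟩)
  induction hw using Algebra.adjoin_induction with
  | mem x hx =>
    intro u hu
    rcases hx with ⟨i, rfl⟩ | ⟨i, rfl⟩
    · exact Submodule.smul_mem _ (X i : Amb K n) hu
    · induction hu using Submodule.span_induction with
      | mem v hv =>
        obtain ⟨b, rfl⟩ := hv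
        rw [dOp_mul_dMon]
        exact Submodule.subset_span ⟨_, rfl⟩
      | zero => simp
      | add v v' _ _ hv hv' => rw [mul_add]; exact add_mem hv hv'
      | smul f v hv' hv =>
        have : dOp K n i * (f • v) = f • (dOp K n i * v) + (pderiv i f) • v := by
          refine LinearMap.ext fun p => ?_
          simp only [Module.End.mul_apply, LinearMap.smul_apply, LinearMap.add_apply,
            dOp_apply, smul_eq_mul, Derivation.leibniz]
          ring
        rw [this]
        exact add_mem (Submodule.smul_mem _ _ hv) (Submodule.smul_mem _ _ hv')
  | algebraMap r =>
    intro u hu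
    have : algebraMap K (Module.End K (Amb K n)) r * u = (C r : Amb K n) • u := by
      refine LinearMap.ext fun p => ?_
      simp [C_mul', Module.algebraMap_end_apply]
    rw [this]
    exact Submodule.smul_mem _ _ hu
  | add x y _ _ hx hy => intro u hu; rw [add_mul]; exact add_mem (hx u hu) (hy u hu)
  | mul x y _ _ hx hy => intro u hu; rw [mul_assoc]; exact hx _ (hy u hu)

/-- A differential operator with values in `x_i A` is left divisible by `x_i` in the Weyl
algebra. -/
lemma exists_eq_xOp_mul (i : Fin (n+1)) {w : Module.End K (Amb K n)} (hw : w ∈ Weyl K n)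
    (h : ∀ a, (X i : Amb K n) ∣ w (monomial a 1)) :
    ∃ v ∈ Weyl K n, w = xOp K n i * v := by
  obtain ⟨f, rfl⟩ := Finsupp.mem_span_range_iff_exists_finsupp.1 (Weyl_le_span K n hw)
  have hf : ∀ a, (X i : Amb K n) ∣ f a := by
    intro a
    induction a using WellFoundedLT.induction with
    | ind a ih =>
      have ha := h a
      simp only [Finsupp.sum, LinearMap.sum_apply, LinearMap.smul_apply, smul_eq_mul,
        dMon_monomial] at ha
      by_cases has : a ∈ f.support
      swap
      · simp [Finsupp.notMem_support_iff.1 has]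
      rw [← Finset.add_sum_erase _ _ has] at ha
      have hrest : (X i : Amb K n) ∣ ∑ b ∈ f.support.erase a,
          f b * monomial (a - b) (∏ j, ((a j).descFactorial (b j) : K)) := by
        refine Finset.dvd_sum fun b hb => ?_
        by_cases hba : b ≤ a
        · exact (ih b (lt_of_le_of_ne hba (Finset.ne_of_mem_erase hb))).mul_right _
        · rw [Finsupp.le_def] at hba
          push Not at hba
          obtain ⟨j, hj⟩ := hba
          rw [Finset.prod_eq_zero (Finset.mem_univ j)
            (by simpa using Nat.descFactorial_of_lt hj)]
          simp
      have hlead := (dvd_add_left hrest).1 ha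
      have hne : (∏ j, ((a j).descFactorial (a j) : K)) ≠ 0 :=
        Finset.prod_ne_zero_iff.2 fun j _ => by
          simpa [Nat.descFactorial_self] using Nat.factorial_ne_zero (a j)
      rw [tsub_self] at hlead
      exact ((IsUnit.mk0 _ hne).map (C : K →+* Amb K n)).dvd_mul_right.1 hlead
  choose g hg using hf
  refine ⟨∑ b ∈ f.support, g b • dMon K n b,
    sum_mem fun b _ => smul_mem_Weyl K n _ (dMon_mem K n b), ?_⟩
  rw [Finset.mul_sum, Finsupp.sum]
  refine Finset.sum_congr rfl fun b _ => ?_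
  rw [hg b, mul_smul]
  rfl

/-- The commutator `u ↦ [x_i, u]`. -/
def adX (i : Fin (n+1)) : Module.End K (Module.End K (Amb K n)) :=
  LinearMap.mulLeft K (xOp K n i) - LinearMap.mulRight K (xOp K n i)

lemma adX_apply (i : Fin (n+1)) (u : Module.End K (Amb K n)) :
    adX K n i u = xOp K n i * u - u * xOp K n i := rfl

lemma adX_mul (i : Fin (n+1)) (u v : Module.End K (Amb K n)) :
    adX K n i (u * v) = adX K n i u * v + u * adX K n i v := by
  simp only [adX_apply, mul_sub, sub_mul, mul_assoc]
  abel

lemma adX_pow_mul (i : Fin (n+1)) (k l : ℕ) (u v : Module.End K (Amb K n))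
    (hu : (adX K n i ^ k) u = 0) (hv : (adX K n i ^ l) v = 0) :
    (adX K n i ^ (k + l)) (u * v) = 0 := by
  induction hN : k + l generalizing k l u v with
  | zero =>
    obtain rfl : k = 0 := by omega
    have : u = 0 := by simpa using hu
    simp [this]
  | succ N ih =>
    rcases k with _ | k
    · have : u = 0 := by simpa using hu
      simp [this]
    rcases l with _ | l
    · have : v = 0 := by simpa using hv
      simp [this]
    rw [pow_succ, Module.End.mul_apply, adX_mul, map_add,
      ih k (l + 1) _ _ (by rwa [pow_succ, Module.End.mul_apply] at hu) hv (by omega),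
      ih (k + 1) l _ _ hu (by rwa [pow_succ, Module.End.mul_apply] at hv) (by omega), add_zero]

lemma exists_adX_pow_eq_zero (i : Fin (n+1)) {w : Module.End K (Amb K n)}
    (hw : w ∈ Weyl K n) : ∃ k, (adX K n i ^ k) w = 0 := by
  induction hw using Algebra.adjoin_induction with
  | mem x hx =>
    rcases hx with ⟨j, rfl⟩ | ⟨j, rfl⟩
    · refine ⟨1, ?_⟩
      rw [pow_one, adX_apply]
      refine LinearMap.ext fun p => ?_
      simp only [LinearMap.sub_apply, Module.End.mul_apply, xOp_apply, LinearMap.zero_apply]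
      ring
    · refine ⟨2, ?_⟩
      refine LinearMap.ext fun p => ?_
      simp only [pow_two, adX_apply, LinearMap.sub_apply, Module.End.mul_apply, xOp_apply,
        dOp_apply, LinearMap.zero_apply, Derivation.leibniz, smul_eq_mul]
      ring
  | algebraMap r =>
    refine ⟨1, ?_⟩
    rw [pow_one, adX_apply, Algebra.commutes, sub_self]
  | add x y _ _ hx hy =>
    obtain ⟨k, hk⟩ := hx
    obtain ⟨l, hl⟩ := hy
    refine ⟨k + l, ?_⟩
    rw [map_add, pow_add, Module.End.mul_apply, Module.End.mul_apply, hl, map_zero, add_zero,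
      ← Module.End.mul_apply, ← pow_add, add_comm k l, pow_add, Module.End.mul_apply, hk,
      map_zero]
  | mul x y _ _ hx hy =>
    obtain ⟨k, hk⟩ := hx
    obtain ⟨l, hl⟩ := hy
    exact ⟨k + l, adX_pow_mul K n i k l x y hk hl⟩

/-- For a differential operator `w`, divisibility of all `w (x_j ^ (k + 1) g)` by `x_i`, `i ≠ j`,
implies that of `w g`. -/
lemma X_dvd_of_forall_pow {i j : Fin (n+1)} (hij : i ≠ j) (k : ℕ)
    {w : Module.End K (Amb K n)} (hw : (adX K n j ^ k) w = 0) (g : Amb K n)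
    (h : ∀ l : ℕ, (X i : Amb K n) ∣ w (X j ^ (l + 1) * g)) : (X i : Amb K n) ∣ w g := by
  induction k generalizing w with
  | zero =>
    have : w = 0 := by simpa using hw
    simp [this]
  | succ k ih =>
    have hcomm : ∀ p, adX K n j w p = X j * w p - w (X j * p) := fun p => rfl
    have h1 : (X i : Amb K n) ∣ adX K n j w g := by
      refine ih (by rwa [pow_succ, Module.End.mul_apply] at hw) fun l => ?_
      rw [hcomm, ← mul_assoc, ← pow_succ']
      exact dvd_sub ((h l).mul_left _) (h (l + 1))
    have h2 : (X i : Amb K n) ∣ X j * w g := by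
      have h0 := h 0
      rw [zero_add, pow_one] at h0
      rw [hcomm] at h1
      exact (dvd_sub_left h0).1 h1
    refine (MvPolynomial.X_prime.dvd_or_dvd h2).resolve_left fun hd => ?_
    rw [X_dvd_X] at hd
    tauto

lemma euler_monomial (a : Fin (n+1) →₀ ℕ) :
    euler K n d (monomial a 1) = ((∑ i, a i * d i : ℕ) : K) • monomial a 1 := by
  simp only [euler, LinearMap.sum_apply, LinearMap.smul_apply, Module.End.mul_apply, xOp_apply,
    dOp_apply, Nat.cast_sum, Finset.sum_smul]
  refine Finset.sum_congr rfl fun i _ => ?_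
  rw [X_mul_pderiv_monomial, ← Nat.cast_smul_eq_nsmul K, smul_smul]
  push_cast
  rw [mul_comm]

/-- Multiplication by `x_i` is injective on `D/D(E - t)` as soon as there are two variables. -/
lemma mem_of_xElt_mul_mem {i j : Fin (n+1)} (hij : i ≠ j) (hd : ∀ i, 0 < d i) (t : K)
    (m w : Weyl K n) (h : xElt K n i * m = w * (eulerElt K n d - t • 1)) :
    ∃ v : Weyl K n, m = v * (eulerElt K n d - t • 1) := by
  have heval : ∀ a : Fin (n+1) →₀ ℕ, (X i : Amb K n) * (m : Module.End K (Amb K n)) (monomial a 1)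
      = (((∑ i, a i * d i : ℕ) : K) - t) • (w : Module.End K (Amb K n)) (monomial a 1) := by
    intro a
    have := congrArg (fun u : Weyl K n => (u : Module.End K (Amb K n)) (monomial a 1)) h
    change X i * _ = (w : Module.End K (Amb K n)) (euler K n d (monomial a 1) - t • monomial a 1)
      at this
    rw [this, euler_monomial, ← sub_smul, map_smul]
  have hne : ∀ a : Fin (n+1) →₀ ℕ, ((∑ i, a i * d i : ℕ) : K) ≠ t →
      (X i : Amb K n) ∣ (w : Module.End K (Amb K n)) (monomial a 1) := by
    intro a ha
    refine ⟨(((∑ i, a i * d i : ℕ) : K) - t)⁻¹ • (m : Module.End K (Amb K n)) (monomial a 1), ?_⟩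
    rw [mul_smul_comm, heval, smul_smul, inv_mul_cancel₀ (sub_ne_zero.2 ha), one_smul]
  have hall : ∀ a : Fin (n+1) →₀ ℕ,
      (X i : Amb K n) ∣ (w : Module.End K (Amb K n)) (monomial a 1) := by
    intro a
    by_cases ha : ((∑ i, a i * d i : ℕ) : K) = t
    swap
    · exact hne a ha
    obtain ⟨k, hk⟩ := exists_adX_pow_eq_zero K n j w.2
    refine X_dvd_of_forall_pow K n hij k hk _ fun l => ?_
    rw [X_pow_eq_monomial, monomial_mul, one_mul]
    refine hne _ ?_
    rw [← ha, Ne, Nat.cast_inj]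
    refine ne_of_gt (Finset.sum_lt_sum (fun s _ => Nat.mul_le_mul_right _ (by simp))
      ⟨j, Finset.mem_univ j, Nat.mul_lt_mul_of_pos_right (by simp) (hd j)⟩)
  obtain ⟨v, hv, hwv⟩ := exists_eq_xOp_mul K n i w.2 hall
  refine ⟨⟨v, hv⟩, ?_⟩
  have hw : w = xElt K n i * ⟨v, hv⟩ := Subtype.ext hwv
  rw [hw, mul_assoc] at h
  refine Subtype.ext (LinearMap.ext fun p => ?_)
  exact mul_left_cancel₀ (X_ne_zero i)
    (congrArg (fun u : Weyl K n => (u : Module.End K (Amb K n)) p) h)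

/-- Assume `n ≥ 2` and let `λ ∈ K`.  The left `D`-module `D/D(E−λ)` is
torsion-free over `A`: if `m ∈ D` and there is `N ∈ ℕ` such that
`x_0^{b_0}∘⋯∘x_n^{b_n}∘m ∈ D(E−λ)` for every `(b_0,…,b_n) ∈ ℕ^{n+1}` with
`Σ_i b_i d_i ≥ N`, then `m ∈ D(E−λ)`. -/
theorem stmt9 (hn : 2 ≤ n) (hd : ∀ i, 0 < d i) (t : K) (m : Weyl K n)
    (h : ∃ N : ℕ, ∀ b : Fin (n+1) → ℕ, N ≤ ∑ i, b i * d i →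
        ∃ w : Weyl K n,
          (List.ofFn fun i => xElt K n i ^ b i).prod * m = w * (eulerElt K n d - t • 1)) :
    ∃ w : Weyl K n, m = w * (eulerElt K n d - t • 1) := by
  obtain ⟨N, hN⟩ := h
  obtain ⟨w, hw⟩ := hN (Pi.single 0 N) (by
    rw [Finset.sum_eq_single 0 (fun i _ hi => by simp [hi]) (by simp)]
    simpa using Nat.le_mul_of_pos_right N (hd 0))
  have hprod : (List.ofFn fun i => xElt K n i ^ (Pi.single 0 N : Fin (n+1) → ℕ) i).prod
      = xElt K n 0 ^ N := by
    simp [List.ofFn_succ, Fin.succ_ne_zero]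
  rw [hprod] at hw
  have h01 : (0 : Fin (n+1)) ≠ Fin.last n := by
    rw [Ne, Fin.ext_iff]
    simp only [Fin.val_zero, Fin.val_last]
    omega
  clear hN hprod
  induction N generalizing w with
  | zero => exact ⟨w, by simpa using hw⟩
  | succ N ih =>
    rw [pow_succ', mul_assoc] at hw
    obtain ⟨v, hv⟩ := mem_of_xElt_mul_mem K n d h01 hd t _ w hw
    exact ih v hv

end
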